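/- Let E ⊆ ℤ^r, α ∈ ℤ^r and j ∈ {1,…,r}. Suppose there exist a subset J ⊆ {1,…,r} with j ∈ J and a maximal point β of E_J := pr_J(E) ⊆ ℤ^J such that β_j = α_j and β_i < α_i for all i ∈ J with i ≠ j. Then F̄_j(E, α) = ∅. -/

import Mathlib

/-- The fiber `F(E,α)`. -/
def Fib {ι : Type*} (E : Set (ι → ℤ)) (α : ι → ℤ) : Set (ι → ℤ) :=
  {β ∈ E | ∃ i, β i = α i ∧ ∀ j ≠ i, α j < β j}

/-- The closed fiber `F̄_i(E,α)`. -/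
def FibBar {ι : Type*} (E : Set (ι → ℤ)) (i : ι) (α : ι → ℤ) : Set (ι → ℤ) :=
  {β ∈ E | β i = α i ∧ ∀ j ≠ i, α j ≤ β j}

theorem fibBar_subset_fib_of_lt {ι : Type*} (E : Set (ι → ℤ)) {i : ι} {α β : ι → ℤ}
    (hβi : β i = α i) (hβlt : ∀ j ≠ i, β j < α j) : FibBar E i α ⊆ Fib E β :=
  fun _ ⟨hγE, hγi, hγ⟩ =>
    ⟨hγE, i, hγi.trans hβi.symm, fun j hj => (hβlt j hj).trans_le (hγ j hj)⟩

theorem mapsTo_comp_fibBar {ι κ : Type*} {f : κ → ι} (hf : Function.Injective f)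
    (E : Set (ι → ℤ)) (k : κ) (α : ι → ℤ) :
    Set.MapsTo (· ∘ f) (FibBar E (f k) α) (FibBar ((· ∘ f) '' E) k (α ∘ f)) :=
  fun _ ⟨hγE, hγk, hγ⟩ =>
    ⟨Set.mem_image_of_mem _ hγE, hγk, fun l hl => hγ (f l) (hf.ne hl)⟩

theorem stmt_13_general {ι : Type*} {E : Set (ι → ℤ)} {α : ι → ℤ} {J : Set ι} {j : J}
    {β : J → ℤ} (hβmax : Fib (J.domRestrict '' E) β = ∅) (hβj : β j = α j)
    (hβlt : ∀ i ≠ j, β i < α i) : FibBar E j α = ∅ := by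
  have h_proj : Set.MapsTo J.domRestrict (FibBar E j α)
      (FibBar (J.domRestrict '' E) j (J.domRestrict α)) :=
    mapsTo_comp_fibBar Subtype.val_injective E j α
  have h_fib : FibBar (J.domRestrict '' E) j (J.domRestrict α) ⊆ ∅ :=
    hβmax ▸ fibBar_subset_fib_of_lt _ hβj hβlt
  exact Set.mapsTo_empty_iff.mp (h_proj.mono_right h_fib)

/-- Let `E ⊆ ℤ^r`, `α ∈ ℤ^r` and `j ∈ {1,…,r}`. If there are a
subset `J ∋ j` and a maximal point `β` of `E_J = pr_J(E)` with `β_j = α_j` and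
`β_i < α_i` for all `i ∈ J`, `i ≠ j`, then `F̄_j(E,α) = ∅`. -/
theorem stmt_13 {r : ℕ} (E : Set (Fin r → ℤ)) (α : Fin r → ℤ) (j : Fin r)
    (J : Set (Fin r)) (hjJ : j ∈ J) (β : J → ℤ)
    (hβE : β ∈ (fun g : Fin r → ℤ => fun s : J => g s) '' E)
    (hβmax : Fib ((fun g : Fin r → ℤ => fun s : J => g s) '' E) β = ∅)
    (hβj : β ⟨j, hjJ⟩ = α j)
    (hβlt : ∀ (i : Fin r) (hi : i ∈ J), i ≠ j → β ⟨i, hi⟩ < α i) :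
    FibBar E j α = ∅ :=
  stmt_13_general hβmax hβj fun i hi => hβlt i i.2 (Subtype.coe_ne_coe.mpr hi)
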